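/- Universal approximation on compacts (Theorem UAT_K): for every v ∈ C²(H), all compact sets K, K' ⊆ H and every ε > 0, there exist d ∈ ℕ and f ∈ 𝒩_d such that the cylindrical function w_f satisfies sup_{x∈K} |v(x) − w_f(x)| < ε, sup_{x∈K} ‖Dv(x) − Dw_f(x)‖ < ε, and sup_{x∈K, h∈K'} ‖(D²v(x) − D²w_f(x)) h‖ < ε. In other words, the class of Hilbert–Galerkin Neural Operators is dense in C²(H) for the compact-open topology in which the Hessian space also carries the compact-open topology. -/

import Mathlib

open Filter Topology
open scoped RealInnerProductSpace

/-- The coordinate map `x ↦ (⟪e 0, x⟫, …, ⟪e (d-1), x⟫)` of a Hilbert space with respect to the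
first `d` elements of a sequence `e`. -/
noncomputable def euclCoord {H : Type*} [NormedAddCommGroup H] [InnerProductSpace ℝ H]
    (e : ℕ → H) (d : ℕ) (x : H) : EuclideanSpace ℝ (Fin d) :=
  WithLp.toLp 2 fun i => ⟪e i, x⟫

/-- The cylindrical function (Hilbert–Galerkin Neural Operator) with inner network `f`. -/
noncomputable def cyl {H : Type*} [NormedAddCommGroup H] [InnerProductSpace ℝ H]
    (e : ℕ → H) {d : ℕ} (f : EuclideanSpace ℝ (Fin d) → ℝ) (x : H) : ℝ :=
  f (euclCoord e d x)

section HgnoHelpers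

theorem hgno_eventually_forall {X ι : Type*} [TopologicalSpace X] {K : Set X} (hK : IsCompact K)
    (l : Filter ι) (Q : X → ι → Prop)
    (h : ∀ x ∈ K, ∀ᶠ p : X × ι in 𝓝 x ×ˢ l, Q p.1 p.2) :
    ∀ᶠ d in l, ∀ x ∈ K, Q x d := by
  refine hK.induction_on (p := fun s => ∀ᶠ d in l, ∀ x ∈ s, Q x d) ?_ ?_ ?_ ?_
  · simp
  · intro s t hst ht
    filter_upwards [ht] with d hd x hx using hd x (hst hx)
  · intro s t hs ht
    filter_upwards [hs, ht] with d hd hd' x hx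
    exact hx.elim (hd x) (hd' x)
  · intro x hx
    obtain ⟨pa, ha, pb, hb, hab⟩ := eventually_prod_iff.1 (h x hx)
    refine ⟨{y | pa y}, mem_nhdsWithin_of_mem_nhds ha, ?_⟩
    filter_upwards [hb] with d hd y hy using hab hy hd

theorem hgno_uniform {X ι E : Type*} [TopologicalSpace X] [NormedAddCommGroup E]
    {K : Set X} (hK : IsCompact K)
    (l : Filter ι) (F : X → E) (G : X → ι → E) (hF : Continuous F)
    (h : ∀ x, Tendsto (fun p : X × ι => G p.1 p.2) (𝓝 x ×ˢ l) (𝓝 (F x))) {δ : ℝ} (hδ : 0 < δ) :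
    ∀ᶠ d in l, ∀ x ∈ K, ‖F x - G x d‖ < δ := by
  refine hgno_eventually_forall hK l _ fun x _ => ?_
  have h1 : Tendsto (fun p : X × ι => F p.1) (𝓝 x ×ˢ l) (𝓝 (F x)) :=
    (hF.tendsto x).comp tendsto_fst
  have h2 := (h1.sub (h x)).norm
  rw [sub_self, norm_zero] at h2
  exact h2.eventually_lt_const hδ

variable {H : Type*} [NormedAddCommGroup H] [InnerProductSpace ℝ H]

/-- The coordinate map as a continuous linear map. -/
noncomputable def hgnoT (e : ℕ → H) (d : ℕ) : H →L[ℝ] EuclideanSpace ℝ (Fin d) :=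
  (EuclideanSpace.equiv (Fin d) ℝ).symm.toContinuousLinearMap ∘L
    ContinuousLinearMap.pi (fun i : Fin d => innerSL ℝ (e i))

theorem hgnoT_apply (e : ℕ → H) (d : ℕ) (x : H) : hgnoT e d x = euclCoord e d x := rfl

theorem hgnoT_norm_le (e : ℕ → H) (he : Orthonormal ℝ e) (d : ℕ) : ‖hgnoT e d‖ ≤ 1 := by
  refine ContinuousLinearMap.opNorm_le_bound _ zero_le_one fun x => ?_
  rw [one_mul]
  refine le_of_sq_le_sq ?_ (norm_nonneg _)
  rw [EuclideanSpace.norm_sq_eq, hgnoT_apply]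
  have := he.sum_inner_products_le x (s := Finset.range d)
  rw [Finset.sum_range] at this
  exact this

variable [CompleteSpace H]

/-- The projection. -/
noncomputable def hgnoP (e : ℕ → H) (d : ℕ) : H →L[ℝ] H :=
  (hgnoT e d).adjoint ∘L hgnoT e d

theorem hgnoP_apply (e : ℕ → H) (d : ℕ) (x : H) :
    hgnoP e d x = ∑ i ∈ Finset.range d, ⟪e i, x⟫ • e i := by
  refine ext_inner_right ℝ fun y => ?_
  rw [hgnoP, ContinuousLinearMap.comp_apply, ContinuousLinearMap.adjoint_inner_left,
    Finset.sum_range, sum_inner, hgnoT_apply, hgnoT_apply, PiLp.inner_apply]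
  refine Finset.sum_congr rfl fun i _ => ?_
  simp [euclCoord, inner_smul_left, mul_comm]

theorem hgnoP_norm_le (e : ℕ → H) (he : Orthonormal ℝ e) (d : ℕ) : ‖hgnoP e d‖ ≤ 1 := by
  refine (ContinuousLinearMap.opNorm_comp_le _ _).trans ?_
  have h := hgnoT_norm_le e he d
  have h' : ‖(hgnoT e d).adjoint‖ ≤ 1 := by
    rwa [LinearIsometryEquiv.norm_map]
  exact mul_le_one₀ h' (norm_nonneg _) h

theorem hgnoP_tendsto (e : ℕ → H) (he : Orthonormal ℝ e)
    (htot : Dense ((Submodule.span ℝ (Set.range e) : Submodule ℝ H) : Set H)) (x : H) :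
    Tendsto (fun d => hgnoP e d x) atTop (𝓝 x) := by
  have hsp : ⊤ ≤ (Submodule.span ℝ (Set.range e)).topologicalClosure := by
    rw [Submodule.dense_iff_topologicalClosure_eq_top.1 htot]
  have h := ((HilbertBasis.mk he hsp).hasSum_repr x).tendsto_sum_nat
  simp only [HilbertBasis.repr_apply_apply, HilbertBasis.coe_mk] at h
  simpa only [hgnoP_apply] using h

/-- Joint convergence of the projections. -/
theorem hgnoP_joint (e : ℕ → H) (he : Orthonormal ℝ e)
    (htot : Dense ((Submodule.span ℝ (Set.range e) : Submodule ℝ H) : Set H))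
    {α : Type*} {l : Filter α} {u : α → H} {n : α → ℕ} {x : H}
    (hu : Tendsto u l (𝓝 x)) (hn : Tendsto n l atTop) :
    Tendsto (fun a => hgnoP e (n a) (u a)) l (𝓝 x) := by
  have h1 : Tendsto (fun a => hgnoP e (n a) x) l (𝓝 x) := (hgnoP_tendsto e he htot x).comp hn
  have h2 : Tendsto (fun a => hgnoP e (n a) (u a - x)) l (𝓝 0) := by
    have h3 : Tendsto (fun a => ‖u a - x‖) l (𝓝 0) := by
      have := (hu.sub_const x).norm
      rwa [sub_self, norm_zero] at this
    refine squeeze_zero_norm (fun a => ?_) h3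
    exact (hgnoP e (n a)).le_of_opNorm_le (hgnoP_norm_le e he _) _ |>.trans (one_mul _).le
  have := h2.add h1
  simpa [← map_add] using this

/-- The gradient of a composition with a continuous linear map. -/
theorem hgno_gradient_comp {E F : Type*} [NormedAddCommGroup E] [InnerProductSpace ℝ E]
    [CompleteSpace E] [NormedAddCommGroup F] [InnerProductSpace ℝ F] [CompleteSpace F]
    (A : E →L[ℝ] F) (f : F → ℝ) (hf : Differentiable ℝ f) :
    gradient (fun x => f (A x)) = fun x => A.adjoint (gradient f (A x)) := by
  funext x
  refine ext_inner_right ℝ fun y => ?_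
  rw [ContinuousLinearMap.adjoint_inner_left, inner_gradient_left, inner_gradient_left]
  have : HasFDerivAt (fun x => f (A x)) ((fderiv ℝ f (A x)).comp A) x :=
    (hf (A x)).hasFDerivAt.comp x A.hasFDerivAt
  rw [this.fderiv]
  rfl

theorem hgno_gradient_contDiff {E : Type*} [NormedAddCommGroup E] [InnerProductSpace ℝ E]
    [CompleteSpace E] (f : E → ℝ) (hf : ContDiff ℝ 2 f) : ContDiff ℝ 1 (gradient f) := by
  have : ContDiff ℝ 1 (fderiv ℝ f) := hf.fderiv_right (by norm_num)
  exact (InnerProductSpace.toDual ℝ E).symm.contDiff.comp this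

theorem hgno_hess_comp {E F : Type*} [NormedAddCommGroup E] [InnerProductSpace ℝ E]
    [CompleteSpace E] [NormedAddCommGroup F] [InnerProductSpace ℝ F] [CompleteSpace F]
    (A : E →L[ℝ] F) (f : F → ℝ) (hf : ContDiff ℝ 2 f) (x h : E) :
    fderiv ℝ (gradient (fun x => f (A x))) x h =
      A.adjoint (fderiv ℝ (gradient f) (A x) (A h)) := by
  rw [hgno_gradient_comp A f (hf.differentiable (by norm_num))]
  have hg : DifferentiableAt ℝ (gradient f) (A x) :=
    (hgno_gradient_contDiff f hf).differentiable (by norm_num) _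
  have : HasFDerivAt (fun x => A.adjoint (gradient f (A x)))
      (A.adjoint.comp ((fderiv ℝ (gradient f) (A x)).comp A)) x :=
    A.adjoint.hasFDerivAt.comp x (hg.hasFDerivAt.comp x A.hasFDerivAt)
  rw [this.fderiv]
  rfl

end HgnoHelpers

/-- universal approximation on compacts (Theorem UAT_K): Hilbert–Galerkin Neural
Operators built from classes `𝒩 d` of finite-dimensional C² functions that are `C²`-dense on
compacts are dense in `C²(H)` for the compact-open topology in which the Hessian space also
carries the compact-open topology. -/
theorem hgno_universal_approximation_on_compacts
    {H : Type*} [NormedAddCommGroup H] [InnerProductSpace ℝ H] [CompleteSpace H]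
    (e : ℕ → H) (he : Orthonormal ℝ e)
    (htot : Dense ((Submodule.span ℝ (Set.range e) : Submodule ℝ H) : Set H))
    (N : ∀ d : ℕ, Set (EuclideanSpace ℝ (Fin d) → ℝ))
    (hNsmooth : ∀ d : ℕ, ∀ f ∈ N d, ContDiff ℝ 2 f)
    (hNdense : ∀ (d : ℕ) (h : EuclideanSpace ℝ (Fin d) → ℝ), ContDiff ℝ 2 h →
      ∀ K : Set (EuclideanSpace ℝ (Fin d)), IsCompact K → ∀ ε > 0,
      ∃ f ∈ N d,
        (∀ y ∈ K, |h y - f y| < ε) ∧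
        (∀ y ∈ K, ‖gradient h y - gradient f y‖ < ε) ∧
        (∀ y ∈ K, ‖fderiv ℝ (gradient h) y - fderiv ℝ (gradient f) y‖ < ε))
    (v : H → ℝ) (hv : ContDiff ℝ 2 v)
    (K K' : Set H) (hK : IsCompact K) (hK' : IsCompact K')
    (ε : ℝ) (hε : 0 < ε) :
    ∃ (d : ℕ) (f : EuclideanSpace ℝ (Fin d) → ℝ), f ∈ N d ∧
      (∀ x ∈ K, |v x - cyl e f x| < ε) ∧
      (∀ x ∈ K, ‖gradient v x - gradient (cyl e f) x‖ < ε) ∧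
      (∀ x ∈ K, ∀ h ∈ K',
        ‖fderiv ℝ (gradient v) x h - fderiv ℝ (gradient (cyl e f)) x h‖ < ε) := by
  have hgv := hgno_gradient_contDiff v hv
  have hgc : Continuous (gradient v) := hgv.continuous
  have hhc : Continuous (fderiv ℝ (gradient v)) := hgv.continuous_fderiv (by norm_num)
  have hε2 : 0 < ε / 2 := by positivity
  have e1 := hgno_uniform hK atTop v (fun x d => v (hgnoP e d x)) hv.continuous
    (fun x => (hv.continuous.tendsto x).comp
      (hgnoP_joint e he htot tendsto_fst tendsto_snd)) hε2
  have e2 := hgno_uniform hK atTop (gradient v)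
    (fun x d => hgnoP e d (gradient v (hgnoP e d x))) hgc
    (fun x => hgnoP_joint e he htot ((hgc.tendsto x).comp
      (hgnoP_joint e he htot tendsto_fst tendsto_snd)) tendsto_snd) hε2
  have e3 := hgno_uniform (hK.prod hK') atTop
    (fun p : H × H => fderiv ℝ (gradient v) p.1 p.2)
    (fun p d => hgnoP e d (fderiv ℝ (gradient v) (hgnoP e d p.1) (hgnoP e d p.2)))
    ((hhc.comp continuous_fst).clm_apply continuous_snd)
    (fun p => by
      have hp1 : Tendsto (fun q : (H × H) × ℕ => q.1.1) (𝓝 p ×ˢ atTop) (𝓝 p.1) :=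
        (continuous_fst.tendsto p).comp tendsto_fst
      have hp2 : Tendsto (fun q : (H × H) × ℕ => q.1.2) (𝓝 p ×ˢ atTop) (𝓝 p.2) :=
        (continuous_snd.tendsto p).comp tendsto_fst
      have hc : Continuous (fun p : H × H => fderiv ℝ (gradient v) p.1 p.2) :=
        (hhc.comp continuous_fst).clm_apply continuous_snd
      exact hgnoP_joint e he htot ((hc.tendsto p).comp
        ((hgnoP_joint e he htot hp1 tendsto_snd).prodMk_nhds
          (hgnoP_joint e he htot hp2 tendsto_snd))) tendsto_snd) hε2
  obtain ⟨d, h1, h2, h3⟩ := (e1.and (e2.and e3)).exists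
  obtain ⟨R, hR⟩ := hK'.isBounded.exists_norm_le
  have hRp : 0 < 1 + |R| := by positivity
  set T := hgnoT e d with hT
  have hTn : ‖T‖ ≤ 1 := hgnoT_norm_le e he d
  have hTn' : ‖T.adjoint‖ ≤ 1 := by rwa [LinearIsometryEquiv.norm_map]
  have hw : ContDiff ℝ 2 (fun y => v (T.adjoint y)) := hv.comp T.adjoint.contDiff
  obtain ⟨f, hfN, f1, f2, f3⟩ := hNdense d (fun y => v (T.adjoint y)) hw (T '' K)
    (hK.image T.continuous) (ε / 2 / (1 + |R|)) (by positivity)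
  have hδ : ε / 2 / (1 + |R|) ≤ ε / 2 := div_le_self hε2.le (by linarith [abs_nonneg R])
  have hf := hNsmooth d f hfN
  have hcyl : cyl e f = fun x => f (T x) := rfl
  refine ⟨d, f, hfN, ?_, ?_, ?_⟩
  · intro x hx
    have a := h1 x hx
    have b := f1 (T x) ⟨x, hx, rfl⟩
    rw [Real.norm_eq_abs] at a
    have := abs_sub_le (v x) (v (hgnoP e d x)) (cyl e f x)
    have b' : |v (hgnoP e d x) - cyl e f x| < ε / 2 / (1 + |R|) := b
    linarith
  · intro x hx
    have a := h2 x hx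
    have b := f2 (T x) ⟨x, hx, rfl⟩
    rw [hgno_gradient_comp T.adjoint v (hv.differentiable (by norm_num)),
      ContinuousLinearMap.adjoint_adjoint] at b
    rw [hcyl, hgno_gradient_comp T f (hf.differentiable (by norm_num))]
    have c := T.adjoint.le_of_opNorm_le hTn'
      (T (gradient v (T.adjoint (T x))) - gradient f (T x))
    rw [map_sub, one_mul] at c
    have t := norm_sub_le_norm_sub_add_norm_sub (gradient v x)
      (hgnoP e d (gradient v (hgnoP e d x))) (T.adjoint (gradient f (T x)))
    have c' : ‖hgnoP e d (gradient v (hgnoP e d x)) - T.adjoint (gradient f (T x))‖ ≤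
      ‖T (gradient v (T.adjoint (T x))) - gradient f (T x)‖ := c
    exact t.trans_lt (by linarith)
  · intro x hx h hh
    have a := h3 (x, h) ⟨hx, hh⟩
    have b := f3 (T x) ⟨x, hx, rfl⟩
    have c := (fderiv ℝ (gradient fun y => v (T.adjoint y)) (T x) -
      fderiv ℝ (gradient f) (T x)).le_of_opNorm_le b.le (T h)
    rw [sub_apply, hgno_hess_comp T.adjoint v hv,
      ContinuousLinearMap.adjoint_adjoint] at c
    rw [hcyl, hgno_hess_comp T f hf]
    have g := T.adjoint.le_of_opNorm_le hTn'
      (T (fderiv ℝ (gradient v) (T.adjoint (T x)) (T.adjoint (T h))) -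
        fderiv ℝ (gradient f) (T x) (T h))
    rw [map_sub, one_mul] at g
    have g' := g.trans c
    have hTh : ‖T h‖ ≤ 1 + |R| := by
      have := T.le_of_opNorm_le hTn h
      linarith [hR h hh, le_abs_self R]
    have k : ε / 2 / (1 + |R|) * ‖T h‖ ≤ ε / 2 := by
      calc ε / 2 / (1 + |R|) * ‖T h‖ ≤ ε / 2 / (1 + |R|) * (1 + |R|) := by gcongr
        _ = ε / 2 := by field_simp
    have t := norm_sub_le_norm_sub_add_norm_sub (fderiv ℝ (gradient v) x h)
      (hgnoP e d (fderiv ℝ (gradient v) (hgnoP e d x) (hgnoP e d h)))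
      (T.adjoint (fderiv ℝ (gradient f) (T x) (T h)))
    have g'' : ‖hgnoP e d (fderiv ℝ (gradient v) (hgnoP e d x) (hgnoP e d h)) -
      T.adjoint (fderiv ℝ (gradient f) (T x) (T h))‖ ≤ ε / 2 / (1 + |R|) * ‖T h‖ := g'
    have a' : ‖fderiv ℝ (gradient v) x h -
      hgnoP e d (fderiv ℝ (gradient v) (hgnoP e d x) (hgnoP e d h))‖ < ε / 2 := a
    exact t.trans_lt (by linarith)
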